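/- Let G be a set of lines as in the context and let t_0, t ∈ ℝ with t_0 ≠ t. Define V = {(x, y, z) ∈ (ℝ^{d−1})^3 : there exist (ξ_1, x_1), (ξ_2, x_2) ∈ G_X with x_1 + t_0 ξ_1 = x_2 + t_0 ξ_2 = x, x_1 + t ξ_1 = y, and x_2 + t ξ_2 = z}. Then, with all measures interpreted as Lebesgue outer measures, ℒ^{3(d−1)}(V) · ℒ^{d−1}(π_{t_0}(G)) ≥ |t_0 − t|^{2(d−1)} · |G|^2. -/

import Mathlib

open MeasureTheory ENNReal

noncomputable section

/-- `ℝ^{d-1}`, identified with the hyperplane `H` in `ℝ^d`. -/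
abbrev Euc (n : ℕ) := EuclideanSpace ℝ (Fin n)

/-- The slice `π_t(G) = {x + tξ : (ξ,x) ∈ G_X}` of a set of lines `G`. -/
def lineSlice {n : ℕ} (G : Set (Euc n × Euc n)) (t : ℝ) : Set (Euc n) :=
  {y | ∃ w ∈ G, y = w.2 + t • w.1}

/-- `m(G) = sup_ξ ℒ^{d-1}({x : (ξ,x) ∈ G_X})`. -/
def mG {n : ℕ} (G : Set (Euc n × Euc n)) : ℝ≥0∞ :=
  ⨆ ξ : Euc n, volume {x : Euc n | (ξ, x) ∈ G}

/-- Cauchy–Schwarz against a set supporting `f`. -/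
lemma cs_aux {α : Type*} [MeasurableSpace α] (μ : Measure α) (f : α → ℝ≥0∞) (hf : Measurable f)
    (A : Set α) (hA : ∀ a, a ∉ A → f a = 0) :
    (∫⁻ a, f a ∂μ) ^ 2 ≤ (∫⁻ a, f a ^ 2 ∂μ) * μ A := by
  have h1 : ∫⁻ a, f a ∂μ = ∫⁻ a, (f * (toMeasurable μ A).indicator (1 : α → ℝ≥0∞)) a ∂μ := by
    apply lintegral_congr
    intro a
    by_cases ha : a ∈ toMeasurable μ A
    · simp [ha]
    · have : a ∉ A := fun h => ha (subset_toMeasurable μ A h)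
      simp [hA a this]
  have h2 := ENNReal.lintegral_mul_le_Lp_mul_Lq μ Real.HolderConjugate.two_two hf.aemeasurable
    (g := (toMeasurable μ A).indicator 1)
    ((measurable_one.indicator (measurableSet_toMeasurable μ A)).aemeasurable)
  have h3 : ∫⁻ a, ((toMeasurable μ A).indicator (1 : α → ℝ≥0∞) a) ^ (2:ℝ) ∂μ = μ A := by
    rw [← measure_toMeasurable A, ← lintegral_indicator_one (measurableSet_toMeasurable μ A)]
    apply lintegral_congr
    intro a
    by_cases ha : a ∈ toMeasurable μ A <;> simp [ha]
  rw [← h1, h3] at h2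
  have h4 : ∀ x : ℝ≥0∞, (x ^ (1 / (2:ℝ))) ^ 2 = x := by
    intro x
    rw [← ENNReal.rpow_natCast, ← ENNReal.rpow_mul]
    norm_num
  calc (∫⁻ a, f a ∂μ) ^ 2 ≤ _ := pow_le_pow_left' h2 2
    _ = _ := by
      rw [mul_pow, h4, h4]
      simp

/-- The Cauchy–Schwarz lower bound for the set `V` of pairs of lines meeting at a
common point of the slice at height `t₀`:
`ℒ^{3(d-1)}(V) ℒ^{d-1}(π_{t₀}(G)) ≥ |t₀ - t|^{2(d-1)} |G|²`. -/
theorem statement15 (d : ℕ) (hd : 2 ≤ d) (G : Set (Euc (d - 1) × Euc (d - 1)))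
    (hG : MeasurableSet G) (hGfin : volume G ≠ ⊤) (hmfin : mG G ≠ ⊤)
    (t₀ t : ℝ) (ht : t₀ ≠ t)
    (h₀ : volume (lineSlice G t₀) ≠ ⊤) (h₁ : volume (lineSlice G t) ≠ ⊤) :
    ENNReal.ofReal (|t₀ - t| ^ (2 * (d - 1))) * volume G ^ 2 ≤
      volume {w : Euc (d - 1) × Euc (d - 1) × Euc (d - 1) |
          ∃ p₁ ∈ G, ∃ p₂ ∈ G,
            p₁.2 + t₀ • p₁.1 = w.1 ∧ p₂.2 + t₀ • p₂.1 = w.1 ∧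
            p₁.2 + t • p₁.1 = w.2.1 ∧ p₂.2 + t • p₂.1 = w.2.2} *
        volume (lineSlice G t₀) := by
  generalize d - 1 = n at *
  set c : ℝ := t - t₀ with hc
  have hc0 : c ≠ 0 := sub_ne_zero.2 ht.symm
  set F : Set (Euc n × Euc n) := (fun p => (p.2, p.1 - t₀ • p.2)) ⁻¹' G with hF
  have hFm : MeasurableSet F := by
    apply (by fun_prop : Measurable (fun p : Euc n × Euc n => (p.2, p.1 - t₀ • p.2))) hG
  have hFG : volume F = volume G := by
    rw [Measure.volume_eq_prod, Measure.prod_apply_symm hFm, Measure.prod_apply hG]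
    apply lintegral_congr
    intro ξ
    simpa [sub_eq_add_neg, hF, Set.preimage_preimage] using
      measure_preimage_add_right volume (-(t₀ • ξ)) (Prod.mk ξ ⁻¹' G)
  set E : Euc n → Set (Euc n) := fun a => {b | (a, c⁻¹ • (b - a)) ∈ F} with hE
  have hEv : ∀ a, volume (E a) = ENNReal.ofReal (|t₀ - t| ^ n) * volume (Prod.mk a ⁻¹' F) := by
    intro a
    have h1 : volume (E a) = volume ((fun b : Euc n => c⁻¹ • b) ⁻¹' (Prod.mk a ⁻¹' F)) := by
      rw [← measure_preimage_add_right volume (-a)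
        ((fun b : Euc n => c⁻¹ • b) ⁻¹' (Prod.mk a ⁻¹' F))]
      simp only [← sub_eq_add_neg]
      rfl
    rw [h1, Measure.addHaar_preimage_smul volume (inv_ne_zero hc0)]
    congr 2
    rw [finrank_euclideanSpace_fin, inv_pow, inv_inv, abs_pow, hc, abs_sub_comm]
  set V := {w : Euc n × Euc n × Euc n |
          ∃ p₁ ∈ G, ∃ p₂ ∈ G,
            p₁.2 + t₀ • p₁.1 = w.1 ∧ p₂.2 + t₀ • p₂.1 = w.1 ∧
            p₁.2 + t • p₁.1 = w.2.1 ∧ p₂.2 + t • p₂.1 = w.2.2} with hV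
  have key : ∀ a b : Euc n, b ∈ E a ↔ ∃ p ∈ G, p.2 + t₀ • p.1 = a ∧ p.2 + t • p.1 = b := by
    intro a b
    constructor
    · intro h
      refine ⟨_, h, ?_, ?_⟩
      · simp
      · have : c • c⁻¹ • (b - a) = b - a := smul_inv_smul₀ hc0 _
        have h2 : t = t₀ + c := by rw [hc]; ring
        rw [h2, add_smul]
        simp only [this]
        abel
    · rintro ⟨⟨ξ, x⟩, hp, h1, h2⟩
      simp only at h1 h2
      have : c⁻¹ • (b - a) = ξ := by
        rw [inv_smul_eq_iff₀ hc0, ← h1, ← h2, hc, sub_smul]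
        abel
      show (c⁻¹ • (b - a), a - t₀ • (c⁻¹ • (b - a))) ∈ G
      rw [this, ← h1]
      simpa using hp
  have hVm : ∀ w, w ∈ V ↔ w.2.1 ∈ E w.1 ∧ w.2.2 ∈ E w.1 := by
    intro w
    rw [key, key]
    constructor
    · rintro ⟨p, hp, q, hq, h1, h2, h3, h4⟩
      exact ⟨⟨p, hp, h1, h3⟩, ⟨q, hq, h2, h4⟩⟩
    · rintro ⟨⟨p, hp, h1, h3⟩, ⟨q, hq, h2, h4⟩⟩
      exact ⟨p, hp, q, hq, h1, h2, h3, h4⟩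
  have hVmeas : MeasurableSet V := by
    have : V = (fun w : Euc n × Euc n × Euc n => (w.1, c⁻¹ • (w.2.1 - w.1))) ⁻¹' F ∩
        (fun w : Euc n × Euc n × Euc n => (w.1, c⁻¹ • (w.2.2 - w.1))) ⁻¹' F := by
      ext w
      exact hVm w
    rw [this]
    exact ((by fun_prop : Measurable (fun w : Euc n × Euc n × Euc n =>
        (w.1, c⁻¹ • (w.2.1 - w.1)))) hFm).inter
      ((by fun_prop : Measurable (fun w : Euc n × Euc n × Euc n =>
        (w.1, c⁻¹ • (w.2.2 - w.1)))) hFm)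
  have hfm : Measurable (fun a : Euc n => volume (Prod.mk a ⁻¹' F)) :=
    measurable_measure_prodMk_left hFm
  have hVv : volume V = ∫⁻ a, (volume (E a)) ^ 2 := by
    rw [Measure.volume_eq_prod, Measure.prod_apply hVmeas]
    apply lintegral_congr
    intro a
    have : Prod.mk a ⁻¹' V = E a ×ˢ E a := by
      ext w
      exact hVm (a, w)
    rw [this, Measure.volume_eq_prod, Measure.prod_prod, sq]
  have hEm : Measurable (fun a => volume (E a)) := by
    simp_rw [hEv]
    exact hfm.const_mul _
  have hEi : ∫⁻ a, volume (E a) = ENNReal.ofReal (|t₀ - t| ^ n) * volume G := by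
    simp_rw [hEv]
    rw [lintegral_const_mul _ hfm, ← hFG, Measure.volume_eq_prod, Measure.prod_apply hFm]
  have hA : ∀ a, a ∉ lineSlice G t₀ → volume (E a) = 0 := by
    intro a ha
    have : E a = ∅ := by
      ext b
      simp only [Set.mem_empty_iff_false, iff_false]
      intro hb
      obtain ⟨p, hp, h1, -⟩ := (key a b).1 hb
      exact ha ⟨p, hp, h1.symm⟩
    rw [this, measure_empty]
  have := cs_aux volume _ hEm _ hA
  rw [hEi, ← hVv, mul_pow, ← ENNReal.ofReal_pow (by positivity), ← pow_mul, mul_comm n 2] at this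
  exact this

end
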